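/- arXiv:1107.2809 — 2 statements merged into one kernel-verified Lean document; each statement's English description precedes it below -/
import Mathlib

section
/- For every real x > 1, the Cauchy principal value li(x) exists and li(x) = γ + log(log x) + Σ_{n=1}^∞ (log x)ⁿ/(n·n!), where the series on the right converges absolutely. -/
open Real Filter Set

/-!
Write `E u = ∑ uⁿ / (n · n!)` and `Ei u = γ + log |u| + E u`. Termwise differentiation gives
`E' u = (eᵘ - 1) / u`, hence `Ei' u = eᵘ / u`, so `li = Ei ∘ log` is an antiderivative of `1 / log`
on both sides of the singularity at `1`.

The constant `γ` is exactly the one that makes `Ei` vanish at `-∞`: the function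
`t ↦ Ei (-t) - e⁻ᵗ log t` is an antiderivative of `e⁻ᵗ log t`, tends to `γ` at `0`, and differs
from `Ei (-t)` by a null term at `∞`, while `∫₀^∞ e⁻ᵗ log t dt = Γ'(1) = -γ`. Hence `li` vanishes
at `0⁺`, and the truncated integral equals `li x + (li (1 - ε) - li (1 + ε))`. The bracket tends to
`0` because `log` has a simple zero at `1`, so the two logarithmic singularities cancel.
-/

open MeasureTheory
open scoped Topology Nat

theorem tendsto_mul_log_of_hasDerivAt_zero {f : ℝ → ℝ} {f' : ℝ} (hf : HasDerivAt f f' 0)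
    (hf₀ : f 0 = 0) : Tendsto (fun t ↦ f t * log t) (𝓝 0) (𝓝 0) := by
  have hfO : f =O[𝓝 0] fun t ↦ t := by simpa only [hf₀, sub_zero] using hf.isBigO_sub
  refine (hfO.mul (Asymptotics.isBigO_refl log (𝓝 0))).trans_tendsto ?_
  simpa only [zero_mul] using continuous_mul_log.tendsto 0

theorem tendsto_log_sub_log_of_hasDerivAt {f : ℝ → ℝ} {f' a : ℝ} (hf : HasDerivAt f f' a)
    (hfa : f a = 0) (hf' : f' ≠ 0) :
    Tendsto (fun ε ↦ log (f (a - ε)) - log (f (a + ε))) (𝓝[≠] 0) (𝓝 0) := by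
  have hslope : Tendsto (fun ε ↦ log (f (a + ε)) - log ε) (𝓝[≠] 0) (𝓝 (log f')) := by
    have hne : ∀ᶠ ε in 𝓝[≠] (0 : ℝ), ε⁻¹ * f (a + ε) ≠ 0 := by
      simpa [hfa] using hf.tendsto_slope_zero.eventually_ne hf'
    refine (hf.tendsto_slope_zero.log hf').congr' ?_
    filter_upwards [hne] with ε hε
    rw [hfa, sub_zero, smul_eq_mul, log_mul (left_ne_zero_of_mul hε) (right_ne_zero_of_mul hε),
      log_inv]
    ring
  have hneg : Tendsto (fun ε : ℝ ↦ -ε) (𝓝[≠] 0) (𝓝[≠] 0) := by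
    simpa using (hasDerivAt_neg (0 : ℝ)).tendsto_nhdsNE (neg_ne_zero.2 one_ne_zero)
  simpa [Function.comp_def, ← sub_eq_add_neg] using (hslope.comp hneg).sub hslope

theorem tendsto_exp_neg_mul_log_atTop : Tendsto (fun t ↦ exp (-t) * log t) atTop (𝓝 0) := by
  have hO := (Asymptotics.isBigO_refl (fun t ↦ exp (-t)) atTop).mul isLittleO_log_id_atTop.isBigO
  refine hO.trans_tendsto ?_
  simpa [mul_comm] using tendsto_pow_mul_exp_neg_atTop_nhds_zero 1

theorem continuousAt_inv_log {t : ℝ} (h₁ : t ≠ 1) (h₂ : t ≠ -1) :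
    ContinuousAt (fun t ↦ (log t)⁻¹) t := by
  rcases eq_or_ne t 0 with rfl | h₀
  · rw [continuousAt_iff_punctured_nhds]
    simpa [Function.comp_def] using tendsto_inv_atBot_zero.comp tendsto_log_nhdsNE_zero
  · exact (differentiableAt_inv_log h₀ h₁ h₂).continuousAt

theorem intervalIntegrable_inv_log {a b : ℝ} (h₁ : 1 ∉ uIcc a b) (h₂ : -1 ∉ uIcc a b) :
    IntervalIntegrable (fun t ↦ (log t)⁻¹) volume a b :=
  ContinuousOn.intervalIntegrable fun _ ht ↦
    (continuousAt_inv_log (ne_of_mem_of_not_mem ht h₁)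
      (ne_of_mem_of_not_mem ht h₂)).continuousWithinAt

theorem integral_log_mul_exp_neg_Ioi :
    ∫ t in Ioi (0 : ℝ), log t * exp (-t) = -eulerMascheroniConstant := by
  have hΓ : Complex.GammaIntegral =ᶠ[𝓝 1] Complex.Gamma := by
    have hre : ∀ᶠ s : ℂ in 𝓝 1, 0 < s.re :=
      Complex.continuous_re.continuousAt.eventually_const_lt (by simp)
    filter_upwards [hre] with s hs using (Complex.Gamma_eq_integral hs).symm
  have hderiv := (Complex.hasDerivAt_GammaIntegral (s := 1) (by simp)).unique
    (Complex.hasDerivAt_Gamma_one.congr_of_eventuallyEq hΓ)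
  simp only [sub_self, Complex.cpow_zero, one_mul, ← Complex.ofReal_mul] at hderiv
  rw [integral_complex_ofReal] at hderiv
  exact_mod_cast hderiv

theorem integrableOn_log_mul_exp_neg_Ioi :
    IntegrableOn (fun t ↦ log t * exp (-t)) (Ioi 0) := by
  refine Integrable.of_integral_ne_zero ?_
  rw [integral_log_mul_exp_neg_Ioi]
  linarith [one_half_lt_eulerMascheroniConstant]

/-- The entire part `∑_{n ≥ 1} uⁿ / (n · n!) = ∫₀ᵘ (eˢ - 1) / s ds` of the exponential integral,
often written `-Ein (-u)`; the summation index is shifted to start at `0`. -/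
noncomputable def entireExpIntegral (u : ℝ) : ℝ :=
  ∑' n : ℕ, u ^ (n + 1) / (((n : ℝ) + 1) * ((n + 1)! : ℝ))

theorem summable_abs_pow_succ_div_succ_mul_factorial (u : ℝ) :
    Summable fun n : ℕ ↦ |u ^ (n + 1) / (((n : ℝ) + 1) * ((n + 1)! : ℝ))| := by
  refine .of_nonneg_of_le (fun _ ↦ abs_nonneg _) (fun n ↦ ?_)
    ((summable_nat_add_iff 1).2 (summable_pow_div_factorial |u|))
  rw [abs_div, abs_pow, abs_of_pos (by positivity : 0 < ((n : ℝ) + 1) * ((n + 1)! : ℝ))]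
  gcongr
  exact le_mul_of_one_le_left (by positivity) (le_add_of_nonneg_left n.cast_nonneg)

theorem tsum_pow_div_factorial_succ (u : ℝ) :
    ∑' n : ℕ, u ^ n / ((n + 1)! : ℝ) = dslope exp 0 u := by
  rcases eq_or_ne u 0 with rfl | hu
  · rw [dslope_same, Real.deriv_exp, exp_zero, tsum_eq_single 0 fun n hn ↦ by simp [hn]]
    simp
  · have hexp : HasSum (fun n : ℕ ↦ u ^ (n + 1) / ((n + 1)! : ℝ)) (exp u - 1) := by
      have h := NormedSpace.expSeries_div_hasSum_exp u
      rw [← exp_eq_exp_ℝ] at h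
      simpa using (hasSum_nat_add_iff' 1).2 h
    rw [dslope_of_ne _ hu, slope_def_field, exp_zero, sub_zero, ← (hexp.div_const u).tsum_eq]
    congr! 2 with n
    field_simp
    exact (pow_succ u n).symm

theorem hasDerivAt_entireExpIntegral (u : ℝ) :
    HasDerivAt entireExpIntegral (dslope exp 0 u) u := by
  rw [← tsum_pow_div_factorial_succ]
  have hterm (n : ℕ) (y : ℝ) :
      HasDerivAt (fun y ↦ y ^ (n + 1) / (((n : ℝ) + 1) * ((n + 1)! : ℝ)))
        (y ^ n / ((n + 1)! : ℝ)) y := by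
    convert! (hasDerivAt_pow (n + 1) y).div_const (((n : ℝ) + 1) * ((n + 1)! : ℝ)) using 1
    push_cast
    field_simp
  have hbound (n : ℕ) (y : ℝ) (hy : y ∈ Metric.ball 0 (|u| + 1)) :
      ‖y ^ n / ((n + 1)! : ℝ)‖ ≤ (|u| + 1) ^ n / (n ! : ℝ) := by
    rw [mem_ball_zero_iff] at hy
    rw [norm_div, norm_pow, Real.norm_natCast]
    gcongr
    exact n.le_succ
  exact hasDerivAt_tsum_of_isPreconnected (summable_pow_div_factorial (|u| + 1)) Metric.isOpen_ball
    (convex_ball 0 (|u| + 1)).isPreconnected (fun n y _ ↦ hterm n y) hbound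
    (by simp) (summable_abs_pow_succ_div_succ_mul_factorial u).of_abs (by simp)

theorem continuous_entireExpIntegral : Continuous entireExpIntegral :=
  continuous_iff_continuousAt.2 fun u ↦ (hasDerivAt_entireExpIntegral u).continuousAt

theorem entireExpIntegral_zero : entireExpIntegral 0 = 0 := by simp [entireExpIntegral]

/-- The exponential integral `Ei u`, the principal value of `∫_{-∞}^u eˢ / s ds`. Since `Real.log u`
is `log |u|`, one formula serves `u < 0` and `u > 0`; the value `γ` at the pole `u = 0` is junk. -/
noncomputable def expIntegral (u : ℝ) : ℝ :=
  eulerMascheroniConstant + log u + entireExpIntegral u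

theorem hasDerivAt_expIntegral {u : ℝ} (hu : u ≠ 0) :
    HasDerivAt expIntegral (exp u / u) u := by
  convert! ((hasDerivAt_log hu).const_add eulerMascheroniConstant).add
    (hasDerivAt_entireExpIntegral u) using 1
  rw [dslope_of_ne _ hu, slope_def_field, exp_zero]
  field_simp
  ring

theorem hasDerivAt_expIntegral_neg_sub_exp_neg_mul_log {t : ℝ} (ht : t ≠ 0) :
    HasDerivAt (fun t ↦ expIntegral (-t) - exp (-t) * log t) (log t * exp (-t)) t := by
  convert! ((hasDerivAt_expIntegral (neg_ne_zero.2 ht)).comp t (hasDerivAt_neg t)).sub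
    ((hasDerivAt_neg t).exp.mul (hasDerivAt_log ht)) using 1
  field_simp
  ring

theorem tendsto_expIntegral_neg_sub_exp_neg_mul_log_zero :
    Tendsto (fun t ↦ expIntegral (-t) - exp (-t) * log t) (𝓝 0) (𝓝 eulerMascheroniConstant) := by
  have hlog : Tendsto (fun t ↦ (1 - exp (-t)) * log t) (𝓝 0) (𝓝 0) :=
    tendsto_mul_log_of_hasDerivAt_zero ((hasDerivAt_neg 0).exp.const_sub 1) (by simp)
  have hE : Tendsto (fun t ↦ entireExpIntegral (-t)) (𝓝 0) (𝓝 0) := by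
    simpa [Function.comp_def, entireExpIntegral_zero] using
      (continuous_entireExpIntegral.comp continuous_neg).tendsto 0
  have hsum := (hlog.add hE).const_add eulerMascheroniConstant
  rw [add_zero, add_zero] at hsum
  refine hsum.congr fun t ↦ ?_
  rw [expIntegral, log_neg_eq_log]
  ring

theorem tendsto_expIntegral_atBot : Tendsto expIntegral atBot (𝓝 0) := by
  set G : ℝ → ℝ := fun t ↦ expIntegral (-t) - exp (-t) * log t with hG
  -- The junk value `log 0 = 0` makes `G` continuous at `0`.
  have hG₀ : G 0 = eulerMascheroniConstant := by simp [hG, expIntegral, entireExpIntegral_zero]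
  have hcont : ContinuousAt G 0 := by
    rw [ContinuousAt, hG₀]
    exact tendsto_expIntegral_neg_sub_exp_neg_mul_log_zero
  have hderiv : ∀ t ∈ Ioi (0 : ℝ), HasDerivAt G (log t * exp (-t)) t := fun t ht ↦
    hasDerivAt_expIntegral_neg_sub_exp_neg_mul_log (ne_of_gt ht)
  have hlim := tendsto_limUnder_of_hasDerivAt_of_integrableOn_Ioi hderiv
    integrableOn_log_mul_exp_neg_Ioi
  have hint := integral_Ioi_of_hasDerivAt_of_tendsto hcont.continuousWithinAt hderiv
    integrableOn_log_mul_exp_neg_Ioi hlim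
  have hlim_zero : limUnder atTop G = 0 := by
    rw [integral_log_mul_exp_neg_Ioi] at hint
    linarith
  rw [hlim_zero] at hlim
  have hneg : Tendsto (fun t ↦ expIntegral (-t)) atTop (𝓝 0) := by
    simpa [hG] using hlim.add tendsto_exp_neg_mul_log_atTop
  simpa [Function.comp_def] using hneg.comp tendsto_neg_atBot_atTop

/-- The logarithmic integral in the form `li t = Ei (log t)`, meaningful for `0 < t` and `t ≠ 1`. -/
noncomputable def logIntegral (t : ℝ) : ℝ :=
  expIntegral (log t)

theorem hasDerivAt_logIntegral {t : ℝ} (h₀ : 0 < t) (h₁ : t ≠ 1) :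
    HasDerivAt logIntegral (log t)⁻¹ t := by
  have hlog : log t ≠ 0 := log_ne_zero_of_pos_of_ne_one h₀ h₁
  convert! (hasDerivAt_expIntegral hlog).comp t (hasDerivAt_log h₀.ne') using 1
  rw [exp_log h₀]
  field_simp

theorem tendsto_logIntegral_nhdsNE_zero : Tendsto logIntegral (𝓝[≠] 0) (𝓝 0) :=
  tendsto_expIntegral_atBot.comp tendsto_log_nhdsNE_zero

theorem integral_inv_log {a b : ℝ} (ha : 0 < a) (hb : 0 < b) (h₁ : 1 ∉ uIcc a b) :
    ∫ t in a..b, (log t)⁻¹ = logIntegral b - logIntegral a := by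
  have hpos : ∀ t ∈ uIcc a b, 0 < t := fun t ht ↦ (lt_inf_iff.2 ⟨ha, hb⟩).trans_le ht.1
  refine intervalIntegral.integral_eq_sub_of_hasDerivAt
    (fun t ht ↦ hasDerivAt_logIntegral (hpos t ht) (ne_of_mem_of_not_mem ht h₁))
    (intervalIntegrable_inv_log h₁ fun h ↦ ?_)
  linarith [hpos _ h]

theorem integral_inv_log_zero_left {b : ℝ} (h₀ : 0 < b) (h₁ : b < 1) :
    ∫ t in (0 : ℝ)..b, (log t)⁻¹ = logIntegral b := by
  have hint : IntervalIntegrable (fun t ↦ (log t)⁻¹) volume 0 b :=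
    intervalIntegrable_inv_log (by simp [uIcc_of_le h₀.le, h₁]) (by simp [uIcc_of_le h₀.le])
  rw [← sub_zero (logIntegral b)]
  exact intervalIntegral.integral_eq_sub_of_hasDerivAt_of_tendsto h₀
    (fun t ht ↦ hasDerivAt_logIntegral ht.1 (ht.2.trans h₁).ne) hint
    (tendsto_logIntegral_nhdsNE_zero.mono_left (nhdsGT_le_nhdsNE 0))
    ((hasDerivAt_logIntegral h₀ h₁.ne).continuousAt.tendsto.mono_left nhdsWithin_le_nhds)

theorem tendsto_logIntegral_one_sub_sub_logIntegral_one_add :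
    Tendsto (fun ε ↦ logIntegral (1 - ε) - logIntegral (1 + ε)) (𝓝[≠] 0) (𝓝 0) := by
  have hsing : Tendsto (fun ε ↦ log (log (1 - ε)) - log (log (1 + ε))) (𝓝[≠] 0) (𝓝 0) :=
    tendsto_log_sub_log_of_hasDerivAt (hasDerivAt_log one_ne_zero) log_one (by simp)
  have hentire : ContinuousAt
      (fun ε ↦ entireExpIntegral (log (1 - ε)) - entireExpIntegral (log (1 + ε))) 0 := by
    have := continuous_entireExpIntegral
    fun_prop (disch := simp)
  have hsum := hsing.add (hentire.tendsto.mono_left nhdsWithin_le_nhds)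
  simp only [sub_zero, add_zero, sub_self] at hsum
  refine hsum.congr fun ε ↦ ?_
  simp only [logIntegral, expIntegral]
  ring

/-- For every real `x > 1`, the Cauchy principal value `li(x)` exists and equals
`γ + log(log x) + Σ_{n=1}^∞ (log x)ⁿ/(n·n!)`, the series converging absolutely. -/
theorem li_eq_series (x : ℝ) (hx : 1 < x) :
    Summable (fun n : ℕ =>
      |Real.log x ^ (n + 1) / (((n : ℝ) + 1) * (Nat.factorial (n + 1) : ℝ))|) ∧
    Tendsto
      (fun ε : ℝ =>
        (∫ t in (0:ℝ)..(1 - ε), 1 / Real.log t) + ∫ t in (1 + ε)..x, 1 / Real.log t)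
      (nhdsWithin 0 (Set.Ioi 0))
      (nhds (Real.eulerMascheroniConstant + Real.log (Real.log x) +
        ∑' n : ℕ, Real.log x ^ (n + 1) / (((n : ℝ) + 1) * (Nat.factorial (n + 1) : ℝ)))) := by
  refine ⟨summable_abs_pow_succ_div_succ_mul_factorial (log x), ?_⟩
  change Tendsto _ _ (𝓝 (logIntegral x))
  have hlim : Tendsto (fun ε ↦ (logIntegral (1 - ε) - logIntegral (1 + ε)) + logIntegral x)
      (𝓝[>] 0) (𝓝 (logIntegral x)) := by
    simpa only [zero_add] using (tendsto_logIntegral_one_sub_sub_logIntegral_one_add.mono_left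
      (nhdsGT_le_nhdsNE 0)).add_const (logIntegral x)
  refine hlim.congr' ?_
  filter_upwards [Ioo_mem_nhdsGT zero_lt_one] with ε ⟨hε₀, hε₁⟩
  have hright : 1 ∉ uIcc (1 + ε) x := notMem_uIcc_of_lt (by linarith) hx
  simp only [one_div]
  rw [integral_inv_log_zero_left (by linarith) (by linarith),
    integral_inv_log (by linarith) (by linarith) hright]
  ring
end

section
/- The infinite product ∏_{p prime, p>2} (1 − 1/(p−1)²) over all odd primes converges to a positive real number, and the twin prime constant C₂ = 2·∏_{p prime, p>2} (1 − 1/(p−1)²) satisfies 1.32032 < C₂ < 1.32033. -/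
open Real Filter Set

/-!
The product converges too slowly to be evaluated directly, so it is multiplied by the Euler product
`∏_{p > 2} (1 - p⁻²)⁻¹ = π² / 8`. The resulting factors are `1 - ε(p)` with `ε(p) = O(p⁻³)`, and
`ε(n) ≤ 1 / (n - 2)² - 1 / (n - 1)²` telescopes. Hence the accelerated product over the odd primes
below `N` decreases in `N`, while its multiple by `1 - 1 / (N - 2)²` increases: the limit is
enclosed by these two quantities, and `N = 700` is sufficient.
-/

namespace TwinPrimeConstant

open Topology
open scoped Nat

section OddPrimes

/-- The odd primes less than `N`, which index the partial products. -/
def oddPrimesBelow (N : ℕ) : Finset ℕ := {p ∈ Finset.range N | p.Prime ∧ 2 < p}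

theorem two_lt_of_mem_oddPrimesBelow {N p : ℕ} (hp : p ∈ oddPrimesBelow N) : 2 < p :=
  (Finset.mem_filter.1 hp).2.2

theorem prod_oddPrimesBelow_succ {M : Type*} [CommMonoid M] (f : ℕ → M) (N : ℕ) :
    ∏ p ∈ oddPrimesBelow (N + 1), f p =
      (∏ p ∈ oddPrimesBelow N, f p) * if N.Prime ∧ 2 < N then f N else 1 := by
  simp only [oddPrimesBelow, Finset.prod_filter, Finset.prod_range_succ]

theorem primesBelow_eq_insert_two_oddPrimesBelow {N : ℕ} (hN : 2 < N) :
    N.primesBelow = insert 2 (oddPrimesBelow N) := by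
  ext p
  simp only [Nat.mem_primesBelow, oddPrimesBelow, Finset.mem_insert, Finset.mem_filter,
    Finset.mem_range]
  constructor
  · rintro ⟨hpN, hp⟩
    exact hp.two_le.eq_or_lt.imp Eq.symm fun h => ⟨hpN, hp, h⟩
  · rintro (rfl | ⟨hpN, hp, -⟩)
    exacts [⟨hN, Nat.prime_two⟩, ⟨hpN, hp⟩]

theorem prime_iff_coprime_factorial_pred {n : ℕ} (hn : 2 ≤ n) :
    n.Prime ↔ n.Coprime (n - 1)! := by
  rw [Nat.coprime_factorial_iff (by omega), Nat.prime_def_minFac]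
  have := Nat.minFac_le (n := n) (by omega)
  omega

theorem oddPrimesBelow_eq_filter_coprime_factorial (N : ℕ) :
    oddPrimesBelow N = {n ∈ Finset.range N | 2 < n ∧ n.Coprime (n - 1)!} := by
  refine Finset.filter_congr fun n _ => ?_
  rw [and_comm]
  exact and_congr_right fun hn => prime_iff_coprime_factorial_pred hn.le

end OddPrimes

section Limits

theorem tendsto_prod_filter_range {M : Type*} [CommMonoid M] [TopologicalSpace M] {P : ℕ → Prop}
    [DecidablePred P] {f : ℕ → M} (hf : Multipliable fun n : {n // P n} => f n) :
    Tendsto (fun N => ∏ n ∈ Finset.range N with P n, f n) atTop (𝓝 (∏' n : {n // P n}, f n)) := by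
  have h := (hasProd_subtype_iff_mulIndicator (s := {n | P n})).1 hf.hasProd
  refine h.tendsto_prod_nat.congr fun N => ?_
  simp only [Finset.prod_filter, mulIndicator_apply, mem_ofPred_eq]

theorem multipliable_one_sub_one_div_sub_one_sq (P : ℕ → Prop) :
    Multipliable fun n : {n // P n} => 1 - 1 / (((n : ℕ) : ℝ) - 1) ^ 2 := by
  have hsum : Summable fun n : ℕ => 1 / ((n : ℝ) - 1) ^ 2 := by
    rw [← summable_nat_add_iff 1]
    simp
  have hsum' : Summable fun n : {n // P n} => ‖-(1 / (((n : ℕ) : ℝ) - 1) ^ 2)‖ := by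
    simpa [Function.comp_def] using hsum.comp_injective (Subtype.val_injective (p := P))
  simpa only [← sub_eq_add_neg] using multipliable_one_add_of_summable hsum'

theorem tendsto_prod_primesBelow_inv_one_sub_inv_sq :
    Tendsto (fun N : ℕ => ∏ p ∈ N.primesBelow, (1 - ((p : ℝ) ^ 2)⁻¹)⁻¹) atTop (𝓝 (π ^ 2 / 6)) := by
  let invSq : ℕ →*₀ ℝ :=
    { toFun n := ((n : ℝ) ^ 2)⁻¹
      map_zero' := by simp
      map_one' := by simp
      map_mul' m n := by rw [Nat.cast_mul, mul_pow, mul_inv] }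
  have hzeta : HasSum (fun n => invSq n) (π ^ 2 / 6) := by simpa [invSq] using hasSum_zeta_two
  rw [← hzeta.tsum_eq]
  exact EulerProduct.eulerProduct_completely_multiplicative hzeta.summable.norm

theorem tendsto_prod_oddPrimesBelow_inv_one_sub_inv_sq :
    Tendsto (fun N : ℕ => ∏ p ∈ oddPrimesBelow N, (1 - ((p : ℝ) ^ 2)⁻¹)⁻¹) atTop
      (𝓝 (π ^ 2 / 8)) := by
  have h := tendsto_prod_primesBelow_inv_one_sub_inv_sq.const_mul (3 / 4)
  rw [show 3 / 4 * (π ^ 2 / 6) = π ^ 2 / 8 by ring] at h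
  refine h.congr' ?_
  filter_upwards [eventually_gt_atTop 2] with N hN
  have h2 : 2 ∉ oddPrimesBelow N := fun h => (two_lt_of_mem_oddPrimesBelow h).false
  rw [primesBelow_eq_insert_two_oddPrimesBelow hN, Finset.prod_insert h2, ← mul_assoc]
  norm_num

end Limits

section Defect

/-- The deviation from `1` of the accelerated Euler factor: `1 - defect x` is the product of
`1 - 1 / (x - 1) ^ 2` and `(1 - x⁻²)⁻¹`. It is defined over any field so that partial products can
be evaluated in `ℚ`. -/
def defect {K : Type*} [Field K] (x : K) : K := (2 * x - 1) / ((x - 1) ^ 3 * (x + 1))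

variable {K : Type*} [Field K]

theorem ratCast_defect [CharZero K] (q : ℚ) : ((defect q : ℚ) : K) = defect (q : K) := by
  simp only [defect]
  push_cast
  rfl

theorem mul_inv_eq_one_sub_defect {x : K} (hx : x ≠ 0) (hx_sub : x - 1 ≠ 0) (hx_add : x + 1 ≠ 0) :
    (1 - 1 / (x - 1) ^ 2) * (1 - (x ^ 2)⁻¹)⁻¹ = 1 - defect x := by
  have h : 1 - (x ^ 2)⁻¹ = (x - 1) * (x + 1) / x ^ 2 := by
    field_simp
    ring
  rw [h, defect]
  field_simp
  ring

variable [LinearOrder K] [IsStrictOrderedRing K]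

theorem defect_nonneg {x : K} (hx : 1 < x) : 0 ≤ defect x := by
  have : 0 < x - 1 := sub_pos.2 hx
  exact div_nonneg (by linarith) (by positivity)

theorem defect_le_one_div_sq_sub_one_div_sq {x : K} (hx : 2 < x) :
    defect x ≤ 1 / (x - 2) ^ 2 - 1 / (x - 1) ^ 2 := by
  obtain ⟨y, hy, rfl⟩ : ∃ y, 0 < y ∧ x = y + 2 := ⟨x - 2, sub_pos.2 hx, by ring⟩
  have h1 : y + 2 - 1 = y + 1 := by ring
  rw [defect, add_sub_cancel_right, h1, div_sub_div _ _ (by positivity) (by positivity),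
    div_le_div_iff₀ (by positivity) (by positivity), ← sub_nonneg]
  ring_nf
  positivity

theorem one_div_sub_two_sq_le_one {x : K} (hx : 3 ≤ x) : 1 / (x - 2) ^ 2 ≤ 1 := by
  have h : 1 ≤ x - 2 := by linarith
  exact div_le_one_of_le₀ (one_le_pow₀ h) (by positivity)

theorem defect_le_one {x : K} (hx : 3 ≤ x) : defect x ≤ 1 := by
  have h1 := defect_le_one_div_sq_sub_one_div_sq (show 2 < x by linarith)
  have h2 := one_div_sub_two_sq_le_one hx
  have h3 : 0 ≤ 1 / (x - 1) ^ 2 := by positivity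
  linarith

theorem one_sub_one_div_le_mul_one_sub_defect {x : K} (hx : 3 ≤ x) :
    1 - 1 / (x - 2) ^ 2 ≤ (1 - defect x) * (1 - 1 / (x - 1) ^ 2) := by
  have h1 := defect_le_one_div_sq_sub_one_div_sq (show 2 < x by linarith)
  have h2 : 0 ≤ defect x * (1 / (x - 1) ^ 2) :=
    mul_nonneg (defect_nonneg (by linarith)) (by positivity)
  linarith

end Defect

section AcceleratedProd

/-- The partial product of `∏ (1 - 1 / (p - 1) ^ 2) * (1 - p⁻²)⁻¹` over the odd primes `p < N`. -/
def acceleratedProd (K : Type*) [Field K] (N : ℕ) : K :=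
  ∏ p ∈ oddPrimesBelow N, (1 - defect (p : K))

variable {K : Type*} [Field K]

theorem ratCast_acceleratedProd [CharZero K] (N : ℕ) :
    ((acceleratedProd ℚ N : ℚ) : K) = acceleratedProd K N := by
  simp only [acceleratedProd, Rat.cast_prod, Rat.cast_sub, Rat.cast_one, ratCast_defect,
    Rat.cast_natCast]

variable [LinearOrder K] [IsStrictOrderedRing K]

theorem acceleratedProd_mem_Ioo_of_rat {N : ℕ} {a b : ℚ} (h : acceleratedProd ℚ N ∈ Ioo a b) :
    acceleratedProd K N ∈ Ioo (a : K) b := by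
  rw [← ratCast_acceleratedProd]
  exact ⟨Rat.cast_lt.2 h.1, Rat.cast_lt.2 h.2⟩

theorem acceleratedProd_nonneg (N : ℕ) : 0 ≤ acceleratedProd K N := by
  refine Finset.prod_nonneg fun p hp => sub_nonneg.2 (defect_le_one ?_)
  exact_mod_cast two_lt_of_mem_oddPrimesBelow hp

theorem antitone_acceleratedProd : Antitone (acceleratedProd K) := by
  refine antitone_nat_of_succ_le fun N => ?_
  rw [acceleratedProd, prod_oddPrimesBelow_succ]
  refine mul_le_of_le_one_right (acceleratedProd_nonneg N) ?_
  split_ifs with hN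
  · exact sub_le_self 1 (defect_nonneg (by exact_mod_cast hN.1.one_lt))
  · exact le_rfl

theorem monotoneOn_acceleratedProd_mul :
    MonotoneOn (fun N : ℕ => acceleratedProd K N * (1 - 1 / ((N : K) - 2) ^ 2)) {N | 3 ≤ N} := by
  refine monotoneOn_nat_Ici_of_le_succ fun N hN => ?_
  have hN' : (3 : K) ≤ N := by exact_mod_cast hN
  have hstep := one_sub_one_div_le_mul_one_sub_defect hN'
  have hsub : ((N + 1 : ℕ) : K) - 2 = N - 1 := by
    push_cast
    ring
  rw [hsub, acceleratedProd, acceleratedProd, prod_oddPrimesBelow_succ, mul_assoc]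
  refine mul_le_mul_of_nonneg_left ?_ (acceleratedProd_nonneg N)
  split_ifs
  · exact hstep
  · have : 1 / ((N : K) - 1) ^ 2 ≤ 1 / ((N : K) - 2) ^ 2 :=
      one_div_le_one_div_of_le (by nlinarith) (by nlinarith)
    linarith

theorem acceleratedProd_mul_le {M N : ℕ} (hM : 3 ≤ M) (hMN : M ≤ N) :
    acceleratedProd K M * (1 - 1 / ((M : K) - 2) ^ 2) ≤ acceleratedProd K N :=
  (monotoneOn_acceleratedProd_mul hM (hM.trans hMN) hMN).trans <|
    mul_le_of_le_one_right (acceleratedProd_nonneg N) (sub_le_self 1 (by positivity))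

-- Deciding `Nat.Prime` is slow in the kernel, whereas gcds of literals are computed natively.
theorem acceleratedProd_700_mem_Ioo : acceleratedProd ℚ 700 ∈ Ioo 0.814442 0.814443 := by
  rw [acceleratedProd, oddPrimesBelow_eq_filter_coprime_factorial, mem_Ioo]
  decide +kernel

end AcceleratedProd

section TwinPrimeProduct

/-- Half the twin prime constant: the product of `1 - 1 / (p - 1) ^ 2` over the odd primes `p`. -/
noncomputable def twinPrimeProduct : ℝ :=
  ∏' p : {p : ℕ // p.Prime ∧ 2 < p}, (1 - 1 / (((p : ℕ) : ℝ) - 1) ^ 2)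

theorem tendsto_acceleratedProd :
    Tendsto (acceleratedProd ℝ) atTop (𝓝 (twinPrimeProduct * (π ^ 2 / 8))) := by
  have htwin := tendsto_prod_filter_range (f := fun n : ℕ => 1 - 1 / ((n : ℝ) - 1) ^ 2)
    (multipliable_one_sub_one_div_sub_one_sq fun p => p.Prime ∧ 2 < p)
  refine (htwin.mul tendsto_prod_oddPrimesBelow_inv_one_sub_inv_sq).congr fun N => ?_
  rw [← oddPrimesBelow, ← Finset.prod_mul_distrib, acceleratedProd]
  refine Finset.prod_congr rfl fun p hp => ?_
  have hp' : (2 : ℝ) < p := by exact_mod_cast two_lt_of_mem_oddPrimesBelow hp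
  exact mul_inv_eq_one_sub_defect (by linarith) (by linarith) (by linarith)

theorem twinPrimeProduct_mul_mem_Icc {M : ℕ} (hM : 3 ≤ M) :
    twinPrimeProduct * (π ^ 2 / 8) ∈
      Icc (acceleratedProd ℝ M * (1 - 1 / ((M : ℝ) - 2) ^ 2)) (acceleratedProd ℝ M) :=
  ⟨ge_of_tendsto tendsto_acceleratedProd <|
      (eventually_ge_atTop M).mono fun _ => acceleratedProd_mul_le hM,
    antitone_acceleratedProd.le_of_tendsto tendsto_acceleratedProd M⟩

theorem two_mul_twinPrimeProduct_mem_Ioo : 2 * twinPrimeProduct ∈ Ioo 1.32032 1.32033 := by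
  obtain ⟨hlower, hupper⟩ := twinPrimeProduct_mul_mem_Icc (M := 700) (by norm_num)
  obtain ⟨hgt, hlt⟩ := acceleratedProd_mem_Ioo_of_rat (K := ℝ) acceleratedProd_700_mem_Ioo
  have hmul_gt : 0.66016 * (3.141593 ^ 2 / 8) < twinPrimeProduct * (π ^ 2 / 8) := by
    norm_num at hgt hlower ⊢
    linarith
  have hmul_lt : twinPrimeProduct * (π ^ 2 / 8) < 0.660165 * (3.141592 ^ 2 / 8) := by
    norm_num at hlt ⊢
    linarith
  have hprod_gt : 0.66016 < twinPrimeProduct := by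
    refine lt_of_mul_lt_mul_right (lt_of_le_of_lt ?_ hmul_gt) (by positivity)
    gcongr
    exact pi_lt_d6.le
  have hprod_lt : twinPrimeProduct < 0.660165 := by
    refine lt_of_mul_lt_mul_right (hmul_lt.trans_le ?_) (by positivity)
    gcongr
    exact pi_gt_d6.le
  constructor <;> linarith

end TwinPrimeProduct

end TwinPrimeConstant

/-- The infinite product `∏_{p prime, p>2} (1 − 1/(p−1)²)` converges to a positive real
number, and the twin prime constant `C₂ = 2·∏_{p prime, p>2} (1 − 1/(p−1)²)` satisfies
`1.32032 < C₂ < 1.32033`. -/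
theorem twin_prime_constant_bounds :
    Multipliable (fun p : {p : ℕ // p.Prime ∧ 2 < p} => 1 - 1 / (((p : ℕ) : ℝ) - 1) ^ 2) ∧
    0 < ∏' p : {p : ℕ // p.Prime ∧ 2 < p}, (1 - 1 / (((p : ℕ) : ℝ) - 1) ^ 2) ∧
    1.32032 < 2 * ∏' p : {p : ℕ // p.Prime ∧ 2 < p}, (1 - 1 / (((p : ℕ) : ℝ) - 1) ^ 2) ∧
    2 * ∏' p : {p : ℕ // p.Prime ∧ 2 < p}, (1 - 1 / (((p : ℕ) : ℝ) - 1) ^ 2) < 1.32033 := by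
  obtain ⟨hgt, hlt⟩ := TwinPrimeConstant.two_mul_twinPrimeProduct_mem_Ioo
  have hpos : 0 < TwinPrimeConstant.twinPrimeProduct := by linarith
  exact ⟨TwinPrimeConstant.multipliable_one_sub_one_div_sub_one_sq _, hpos, hgt, hlt⟩
end
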